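/- arXiv:0802.4458 — 2 statements merged into one kernel-verified Lean document; each statement's English description precedes it below -/
import Mathlib

section
/- Let X be a CB-analysable topometric space and let ℬ be a base of open sets for the topology of X with cardinality #ℬ ≤ κ for some infinite cardinal κ. Then there is a subset A ⊆ X with #A ≤ κ which is metrically dense: for every x ∈ X and every r > 0 there is a ∈ A with d(x,a) < r. -/
open Set Topology NNReal ENNReal

/-- An extended metric on `X`: `d x y = 0` iff `x = y`, symmetric, triangle inequality. -/
def IsExtMetric {X : Type*} (d : X → X → ℝ≥0∞) : Prop :=
  (∀ x y, d x y = 0 ↔ x = y) ∧ (∀ x y, d x y = d y x) ∧ ∀ x y z, d x z ≤ d x y + d y z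

/-- The metric refines the topology. -/
def MetricRefines {X : Type*} [TopologicalSpace X] (d : X → X → ℝ≥0∞) : Prop :=
  ∀ U : Set X, IsOpen U → ∀ x ∈ U, ∃ r : ℝ≥0, 0 < r ∧ {y | d x y < (r : ℝ≥0∞)} ⊆ U

/-- The metric is lower semi-continuous: for every finite `r`,
`{(x,y) : d x y ≤ r}` is closed in the product topology. -/
def LowerSemiContinuousMetric {X : Type*} [TopologicalSpace X] (d : X → X → ℝ≥0∞) : Prop :=
  ∀ r : ℝ≥0, IsClosed {p : X × X | d p.1 p.2 ≤ (r : ℝ≥0∞)}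

/-- A topometric structure on a topological space. -/
def IsTopometric {X : Type*} [TopologicalSpace X] (d : X → X → ℝ≥0∞) : Prop :=
  IsExtMetric d ∧ MetricRefines d ∧ LowerSemiContinuousMetric d

/-- Distance from a point to a set (infimum over the set; `∞` when empty). -/
noncomputable def distToSet {X : Type*} (d : X → X → ℝ≥0∞) (x : X) (A : Set X) : ℝ≥0∞ :=
  ⨅ a ∈ A, d x a

/-- `A` has diameter at most `ε`. -/
def DiamLE {X : Type*} (d : X → X → ℝ≥0∞) (ε : ℝ≥0) (A : Set X) : Prop :=
  ∀ a ∈ A, ∀ b ∈ A, d a b ≤ (ε : ℝ≥0∞)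

/-- `A` is ε-n-finite: there are no points `a 0, …, a n ∈ A` pairwise at distance
`> ε`. -/
def EpsNFinite {X : Type*} (d : X → X → ℝ≥0∞) (ε : ℝ≥0) (n : ℕ) (A : Set X) : Prop :=
  ¬ ∃ a : Fin (n + 1) → X, (∀ i, a i ∈ A) ∧
    ∀ i j : Fin (n + 1), i < j → (ε : ℝ≥0∞) < d (a i) (a j)

/-- `A` is ε-finite: it is ε-n-finite for some `n`. -/
def EpsFinite {X : Type*} (d : X → X → ℝ≥0∞) (ε : ℝ≥0) (A : Set X) : Prop :=
  ∃ n : ℕ, EpsNFinite d ε n A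

/-- `V` is a relatively open subset of `Y`. -/
def RelOpenIn {X : Type*} [TopologicalSpace X] (Y V : Set X) : Prop :=
  ∃ U : Set X, IsOpen U ∧ V = U ∩ Y

/-- The Cantor–Bendixson derivative of `Y` associated with a smallness predicate `P`:
remove from `Y` the union of all relatively open subsets of `Y` satisfying `P`. -/
def cbDeriv {X : Type*} [TopologicalSpace X] (P : Set X → Prop) (Y : Set X) : Set X :=
  Y \ ⋃₀ {V : Set X | RelOpenIn Y V ∧ P V}

/-- The transfinite Cantor–Bendixson derivative sequence of a derivative operator `D`:
`univ` at `0`, apply `D` at successors, intersect at limits. -/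
noncomputable def cbSeq {X : Type*} (D : Set X → Set X) (o : Ordinal) : Set X :=
  Ordinal.limitRecOn o Set.univ (fun _ ih => D ih)
    (fun o _ ih => ⋂ (b : Ordinal) (h : b < o), ih b h)

/-- `X` is CB-analysable: for every `ε > 0`, some transfinite (d,ε)-Cantor–Bendixson
derivative of `X` is empty. -/
def CBAnalysable (X : Type*) [TopologicalSpace X] (d : X → X → ℝ≥0∞) : Prop :=
  ∀ ε : ℝ≥0, 0 < ε → ∃ α : Ordinal.{0}, cbSeq (cbDeriv (DiamLE d ε)) α = (∅ : Set X)

/-!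
Fix `ε > 0`. Every point `x` leaves the derivative sequence `X_α` at exactly one step, from `X_β` to
`X_{β + 1}`, so some basic open `B ∋ x` meets `X_β` in a set of diameter at most `ε`. The set `B`
determines the stage `β`: passing to `X_{β + 1}` removes all of `B ∩ X_β`, so `B` misses every later
stage. Hence points with the same `B` are at distance at most `ε`, and choosing one point for each
`B` gives an `ε`-net with at most `#ℬ` elements. The union of these nets over `ε = 1 / (n + 1)` is
dense.
-/

section CantorBendixson

universe v

variable {X : Type*} {D : Set X → Set X}

theorem cbSeq_zero (D : Set X → Set X) : cbSeq D (0 : Ordinal.{v}) = univ :=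
  Ordinal.limitRecOn_zero ..

theorem cbSeq_add_one (D : Set X → Set X) (α : Ordinal.{v}) :
    cbSeq D (α + 1) = D (cbSeq D α) :=
  Ordinal.limitRecOn_add_one ..

theorem cbSeq_limit (D : Set X → Set X) {α : Ordinal.{v}} (hα : Order.IsSuccLimit α) :
    cbSeq D α = ⋂ β < α, cbSeq D β :=
  Ordinal.limitRecOn_limit _ _ _ _ hα

theorem cbSeq_antitone (hD : ∀ Y, D Y ⊆ Y) : Antitone (cbSeq D : Ordinal.{v} → Set X) := by
  intro α β hαβ
  induction β using Ordinal.limitRecOn with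
  | zero => rw [nonpos_iff_eq_zero.1 hαβ]
  | add_one β ih =>
    obtain hlt | rfl := hαβ.lt_or_eq
    · rw [cbSeq_add_one]
      exact (hD _).trans (ih (Order.lt_add_one_iff.1 hlt))
    · exact le_rfl
  | limit β hβ _ =>
    obtain hlt | rfl := hαβ.lt_or_eq
    · rw [cbSeq_limit D hβ]
      exact iInter₂_subset α hlt
    · exact le_rfl

theorem exists_mem_cbSeq_notMem_apply {x : X} {α : Ordinal.{v}} (hx : x ∉ cbSeq D α) :
    ∃ β < α, x ∈ cbSeq D β ∧ x ∉ D (cbSeq D β) := by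
  induction α using Ordinal.limitRecOn with
  | zero => simp [cbSeq_zero] at hx
  | add_one α ih =>
    rw [cbSeq_add_one] at hx
    by_cases hxα : x ∈ cbSeq D α
    · exact ⟨α, Order.lt_add_one_iff.2 le_rfl, hxα, hx⟩
    · obtain ⟨β, hβα, hβ⟩ := ih hxα
      exact ⟨β, hβα.trans (Order.lt_add_one_iff.2 le_rfl), hβ⟩
  | limit α hα ih =>
    simp only [cbSeq_limit D hα, mem_iInter, not_forall] at hx
    obtain ⟨γ, hγα, hxγ⟩ := hx
    obtain ⟨β, hβγ, hβ⟩ := ih γ hγα hxγ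
    exact ⟨β, hβγ.trans hγα, hβ⟩

variable [TopologicalSpace X] {P : Set X → Prop} {ℬ : Set (Set X)}

theorem mem_cbDeriv {Y : Set X} {x : X} :
    x ∈ cbDeriv P Y ↔ x ∈ Y ∧ ∀ U, IsOpen U → x ∈ U → ¬ P (U ∩ Y) := by
  simp only [cbDeriv, RelOpenIn, mem_sdiff, mem_sUnion, mem_ofPred_eq]
  grind

theorem cbDeriv_subset (P : Set X → Prop) (Y : Set X) : cbDeriv P Y ⊆ Y :=
  sdiff_subset

theorem exists_mem_basis_of_notMem_cbDeriv (hP : Antitone P)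
    (hℬ : TopologicalSpace.IsTopologicalBasis ℬ) {Y : Set X} {x : X} (hxY : x ∈ Y)
    (hx : x ∉ cbDeriv P Y) : ∃ B ∈ ℬ, x ∈ B ∧ P (B ∩ Y) := by
  simp only [mem_cbDeriv, hxY, true_and, not_forall, not_not] at hx
  obtain ⟨U, hU, hxU, hPU⟩ := hx
  obtain ⟨B, hB, hxB, hBU⟩ := hℬ.exists_subset_of_mem_open hxU hU
  exact ⟨B, hB, hxB, hP (inter_subset_inter_left Y hBU) hPU⟩

theorem disjoint_cbSeq_of_lt {B : Set X} (hB : IsOpen B) {β γ : Ordinal.{v}}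
    (hPB : P (B ∩ cbSeq (cbDeriv P) β)) (hβγ : β < γ) : Disjoint B (cbSeq (cbDeriv P) γ) := by
  refine disjoint_left.2 fun x hxB hxγ ↦ ?_
  have hx : x ∈ cbDeriv P (cbSeq (cbDeriv P) β) := by
    rw [← cbSeq_add_one (cbDeriv P)]
    exact cbSeq_antitone (cbDeriv_subset P) (Order.add_one_le_of_lt hβγ) hxγ
  exact (mem_cbDeriv.1 hx).2 B hB hxB hPB

theorem eq_of_nonempty_inter_cbSeq {B : Set X} (hB : IsOpen B) {β γ : Ordinal.{v}}
    (hβ : (B ∩ cbSeq (cbDeriv P) β).Nonempty) (hPβ : P (B ∩ cbSeq (cbDeriv P) β))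
    (hγ : (B ∩ cbSeq (cbDeriv P) γ).Nonempty) (hPγ : P (B ∩ cbSeq (cbDeriv P) γ)) : β = γ := by
  rw [← not_disjoint_iff_nonempty_inter] at hβ hγ
  exact le_antisymm (not_lt.1 fun h ↦ hβ (disjoint_cbSeq_of_lt hB hPγ h))
    (not_lt.1 fun h ↦ hγ (disjoint_cbSeq_of_lt hB hPβ h))

theorem exists_map_basis_fiber_of_cbSeq_eq_empty (hP : Antitone P)
    (hℬ : TopologicalSpace.IsTopologicalBasis ℬ) {α : Ordinal.{v}}
    (hα : cbSeq (cbDeriv P) α = ∅) : ∃ f : X → ℬ, ∀ x, P (f ⁻¹' {f x}) := by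
  have isolated (x : X) : ∃ (B : ℬ) (β : Ordinal.{v}),
      x ∈ B.1 ∩ cbSeq (cbDeriv P) β ∧ P (B.1 ∩ cbSeq (cbDeriv P) β) := by
    obtain ⟨β, -, hxβ, hx⟩ := exists_mem_cbSeq_notMem_apply (hα ▸ notMem_empty x)
    obtain ⟨B, hB, hxB, hPB⟩ := exists_mem_basis_of_notMem_cbDeriv hP hℬ hxβ hx
    exact ⟨⟨B, hB⟩, β, ⟨hxB, hxβ⟩, hPB⟩
  choose B rank mem_piece small_piece using isolated
  refine ⟨B, fun x ↦ hP ?_ (small_piece x)⟩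
  intro y (hyx : B y = B x)
  have hy := mem_piece y
  have hPy := small_piece y
  rw [hyx] at hy hPy
  have rank_eq : rank y = rank x :=
    eq_of_nonempty_inter_cbSeq (hℬ.isOpen (B x).2) ⟨y, hy⟩ hPy ⟨x, mem_piece x⟩ (small_piece x)
  exact rank_eq ▸ hy

end CantorBendixson

section Density

universe u v

variable {X : Type u} {d : X → X → ℝ≥0∞}

theorem antitone_diamLE (d : X → X → ℝ≥0∞) (ε : ℝ≥0) : Antitone (DiamLE d ε) :=
  fun _ _ hVW hW a ha b hb ↦ hW a (hVW ha) b (hVW hb)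

theorem exists_net_mk_le_of_diamLE_fiber {ι : Type v} {ε : ℝ≥0} {f : X → ι}
    (hf : ∀ x, DiamLE d ε (f ⁻¹' {f x})) :
    ∃ A : Set X, Cardinal.lift.{v} (Cardinal.mk A) ≤ Cardinal.lift.{u} (Cardinal.mk ι) ∧
      ∀ x, ∃ a ∈ A, d x a ≤ ε := by
  obtain ⟨A, -, hA⟩ := exists_subset_bijOn univ f
  refine ⟨A, Cardinal.lift_mk_le_lift_mk_of_injective hA.injOn.injective, fun x ↦ ?_⟩
  obtain ⟨a, ha, hax⟩ := hA.surjOn (mem_image_of_mem f (mem_univ x))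
  exact ⟨a, ha, hf x x rfl a hax⟩

theorem exists_dense_mk_le_of_forall_exists_net {κ : Cardinal.{u}} (hκ : Cardinal.aleph0 ≤ κ)
    (hnet : ∀ ε : ℝ≥0, 0 < ε →
      ∃ A : Set X, Cardinal.mk A ≤ κ ∧ ∀ x, ∃ a ∈ A, d x a ≤ ε) :
    ∃ A : Set X, Cardinal.mk A ≤ κ ∧
      ∀ x : X, ∀ r : ℝ≥0, 0 < r → ∃ a ∈ A, d x a < (r : ℝ≥0∞) := by
  choose A hAκ hA using fun n : ℕ ↦ hnet (1 / (n + 1)) (by positivity)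
  refine ⟨⋃ n, A n, ?_, fun x r hr ↦ ?_⟩
  · have hsum := Cardinal.mk_iUnion_le_lift A
    simp only [Cardinal.lift_uzero, Cardinal.mk_nat, Cardinal.lift_aleph0] at hsum
    exact hsum.trans (Cardinal.mul_le_of_le hκ hκ (ciSup_le' hAκ))
  · obtain ⟨n, hn⟩ := exists_nat_one_div_lt hr
    obtain ⟨a, ha, hxa⟩ := hA n x
    exact ⟨a, mem_iUnion_of_mem n ha, hxa.trans_lt (ENNReal.coe_lt_coe.2 hn)⟩

end Density

theorem stmt_17_general.{u, v} {X : Type u} [TopologicalSpace X] (d : X → X → ℝ≥0∞)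
    (han : ∀ ε : ℝ≥0, 0 < ε → ∃ α : Ordinal.{v}, cbSeq (cbDeriv (DiamLE d ε)) α = ∅)
    (κ : Cardinal.{u}) (hκ : Cardinal.aleph0 ≤ κ)
    (ℬ : Set (Set X)) (hbase : TopologicalSpace.IsTopologicalBasis ℬ)
    (hcard : Cardinal.mk ℬ ≤ κ) :
    ∃ A : Set X, Cardinal.mk A ≤ κ ∧
      ∀ x : X, ∀ r : ℝ≥0, 0 < r → ∃ a ∈ A, d x a < (r : ℝ≥0∞) := by
  refine exists_dense_mk_le_of_forall_exists_net hκ fun ε hε ↦ ?_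
  obtain ⟨α, hα⟩ := han ε hε
  obtain ⟨f, hf⟩ := exists_map_basis_fiber_of_cbSeq_eq_empty (antitone_diamLE d ε) hbase hα
  obtain ⟨A, hA, hnet⟩ := exists_net_mk_le_of_diamLE_fiber hf
  exact ⟨A, (Cardinal.lift_le.1 hA).trans hcard, hnet⟩

/-- a CB-analysable topometric space with a base of open sets of
cardinality at most an infinite cardinal `κ` has a metrically dense subset of
cardinality at most `κ`. -/
theorem stmt_17 {X : Type*} [TopologicalSpace X] (d : X → X → ℝ≥0∞)
    (htm : IsTopometric d) (han : CBAnalysable X d)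
    (κ : Cardinal) (hκ : Cardinal.aleph0 ≤ κ)
    (ℬ : Set (Set X)) (hbase : TopologicalSpace.IsTopologicalBasis ℬ)
    (hcard : Cardinal.mk ℬ ≤ κ) :
    ∃ A : Set X, Cardinal.mk A ≤ κ ∧
      ∀ x : X, ∀ r : ℝ≥0, 0 < r → ∃ a ∈ A, d x a < (r : ℝ≥0∞) :=
  stmt_17_general d han κ hκ ℬ hbase hcard
end

section
/- Let X be a topometric space, ε > 0, and let (F_σ)_{σ ∈ 2^{<ω}} be an ε-perfect tree in X. Then there is a family (x_τ)_{τ ∈ 2^ω} of points of X with x_τ ∈ ⋂_{n<ω} F_{τ↾n} for each τ ∈ 2^ω and d(x_τ, x_{τ'}) > ε whenever τ ≠ τ'. Consequently, every metrically dense subset A of X (i.e. a set A such that for every x ∈ X and r > 0 there is a ∈ A with d(x,a) < r) has cardinality at least 2^{ℵ₀}. -/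
open Set Topology NNReal ENNReal

/-- Distance between two subsets. -/
noncomputable def setDist {X : Type*} (d : X → X → ℝ≥0∞) (A B : Set X) : ℝ≥0∞ :=
  ⨅ a ∈ A, ⨅ b ∈ B, d a b

/-- An ε-perfect tree: a family of non-empty compact sets indexed by finite binary
strings, decreasing along extensions, with the two successors of each node at distance
`> ε`. -/
def EpsPerfectTree {X : Type*} [TopologicalSpace X] (d : X → X → ℝ≥0∞) (ε : ℝ≥0)
    (F : List Bool → Set X) : Prop :=
  (∀ σ : List Bool, (F σ).Nonempty ∧ IsCompact (F σ)) ∧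
  (∀ σ τ : List Bool, σ <+: τ → F τ ⊆ F σ) ∧
  ∀ σ : List Bool, (ε : ℝ≥0∞) < setDist d (F (σ ++ [false])) (F (σ ++ [true]))

/-!
Lower semi-continuity at `r = 0` says that the diagonal is closed, so `X` is Hausdorff and the
nested compact sets along each branch have a common point. Two distinct branches part at a first
index, and the two successors of the node where they part are at distance `> ε`; hence so are the
chosen points. A metrically dense set meets each ball of radius `ε / 2` around these points, and by
the triangle inequality no point lies in two of these balls.
-/

open PiNat Cardinal

universe u v

section InitialSegment

variable {α : Type*}

/-- The restriction `τ↾n` of an infinite word to its first `n` letters, as a finite word. It is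
spelled with `List.ofFn`, rather than the reversed `PiNat.res`, so that extending `τ` extends the
list to the right. -/
def initialSegment (τ : ℕ → α) (n : ℕ) : List α :=
  List.ofFn fun i : Fin n => τ i

theorem initialSegment_succ (τ : ℕ → α) (n : ℕ) :
    initialSegment τ (n + 1) = initialSegment τ n ++ [τ n] := by
  simp only [initialSegment, List.ofFn_succ_last, Fin.val_castSucc, Fin.val_last]

theorem initialSegment_firstDiff (τ τ' : ℕ → α) :
    initialSegment τ (firstDiff τ τ') = initialSegment τ' (firstDiff τ τ') :=
  congrArg List.ofFn <| funext fun i => apply_eq_of_lt_firstDiff i.isLt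

theorem nonempty_iInter_initialSegment {X : Type*} [TopologicalSpace X] [T2Space X]
    {F : List α → Set X} (hne : ∀ σ, (F σ).Nonempty) (hcompact : ∀ σ, IsCompact (F σ))
    (hanti : ∀ σ τ, σ <+: τ → F τ ⊆ F σ) (τ : ℕ → α) :
    (⋂ n, F (initialSegment τ n)).Nonempty := by
  refine IsCompact.nonempty_iInter_of_sequence_nonempty_isCompact_isClosed _ (fun n => ?_)
    (fun _ => hne _) (hcompact _) (fun _ => (hcompact _).isClosed)
  rw [initialSegment_succ]
  exact hanti _ _ (List.prefix_append _ _)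

end InitialSegment

section Distance

variable {X : Type u} {d : X → X → ℝ≥0∞}

theorem LowerSemiContinuousMetric.t2Space [TopologicalSpace X]
    (hlsc : LowerSemiContinuousMetric d) (hzero : ∀ x y, d x y = 0 ↔ x = y) : T2Space X := by
  have zero_set_eq_diagonal : {p : X × X | d p.1 p.2 ≤ (0 : ℝ≥0)} = diagonal X := by
    ext p
    simp [hzero]
  exact t2_iff_isClosed_diagonal.2 (zero_set_eq_diagonal ▸ hlsc 0)

theorem setDist_le {A B : Set X} {a b : X} (ha : a ∈ A) (hb : b ∈ B) : setDist d A B ≤ d a b :=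
  (iInf₂_le a ha).trans (iInf₂_le b hb)

theorem setDist_comm (hsymm : ∀ x y, d x y = d y x) (A B : Set X) :
    setDist d A B = setDist d B A :=
  calc ⨅ a ∈ A, ⨅ b ∈ B, d a b = ⨅ b ∈ B, ⨅ a ∈ A, d a b := iInf₂_comm _
    _ = ⨅ b ∈ B, ⨅ a ∈ A, d b a :=
      biInf_congr fun b _ => biInf_congr fun a _ => hsymm a b

theorem lt_dist_of_mem_iInter_initialSegment {α : Type*} {F : List α → Set X} {ε : ℝ≥0∞}
    (hsep : ∀ σ a b, a ≠ b → ε < setDist d (F (σ ++ [a])) (F (σ ++ [b])))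
    {τ τ' : ℕ → α} (hne : τ ≠ τ') {x y : X} (hx : x ∈ ⋂ n, F (initialSegment τ n))
    (hy : y ∈ ⋂ n, F (initialSegment τ' n)) : ε < d x y := by
  set n := firstDiff τ τ'
  have hx_succ : x ∈ F (initialSegment τ n ++ [τ n]) :=
    initialSegment_succ τ n ▸ mem_iInter.1 hx (n + 1)
  have hy_succ : y ∈ F (initialSegment τ n ++ [τ' n]) := by
    rw [initialSegment_firstDiff, ← initialSegment_succ]
    exact mem_iInter.1 hy (n + 1)
  exact (hsep _ _ _ (apply_firstDiff_ne hne)).trans_le (setDist_le hx_succ hy_succ)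

theorem lift_mk_le_of_separated_of_forall_exists_near
    (hsymm : ∀ x y, d x y = d y x) (htri : ∀ x y z, d x z ≤ d x y + d y z)
    {ι : Type v} {g : ι → X} {ε : ℝ≥0∞} (hsep : Pairwise fun i j => ε ≤ d (g i) (g j))
    {A : Set X} (hA : ∀ i, ∃ a ∈ A, d (g i) a < ε / 2) :
    lift.{u} #ι ≤ lift.{v} #A := by
  choose near near_mem dist_near_lt using hA
  have near_injective : Function.Injective fun i => (⟨near i, near_mem i⟩ : A) := by
    intro i j hij
    have near_eq : near i = near j := congrArg Subtype.val hij
    by_contra hne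
    refine (hsep hne).not_gt ?_
    calc d (g i) (g j) ≤ d (g i) (near i) + d (near i) (g j) := htri _ _ _
      _ = d (g i) (near i) + d (g j) (near j) := by rw [hsymm (near i), near_eq]
      _ < ε / 2 + ε / 2 := ENNReal.add_lt_add (dist_near_lt i) (dist_near_lt j)
      _ = ε := ENNReal.add_halves ε
  exact lift_mk_le_lift_mk_of_injective near_injective

end Distance

namespace EpsPerfectTree

variable {X : Type*} [TopologicalSpace X] {d : X → X → ℝ≥0∞} {ε : ℝ≥0} {F : List Bool → Set X}

theorem lt_setDist_of_ne (hF : EpsPerfectTree d ε F) (hsymm : ∀ x y, d x y = d y x)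
    (σ : List Bool) (a b : Bool) (hab : a ≠ b) :
    ε < setDist d (F (σ ++ [a])) (F (σ ++ [b])) := by
  obtain ⟨-, -, hsep⟩ := hF
  cases a <;> cases b
  case false.true => exact hsep σ
  case true.false => exact setDist_comm hsymm _ _ ▸ hsep σ
  all_goals exact absurd rfl hab

theorem exists_separated_branch_points [T2Space X] (hF : EpsPerfectTree d ε F)
    (hsymm : ∀ x y, d x y = d y x) :
    ∃ g : (ℕ → Bool) → X, (∀ τ n, g τ ∈ F (initialSegment τ n)) ∧
      ∀ τ τ', τ ≠ τ' → ε < d (g τ) (g τ') := by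
  choose g hg using
    nonempty_iInter_initialSegment (fun σ => (hF.1 σ).1) (fun σ => (hF.1 σ).2) hF.2.1
  exact ⟨g, fun τ => mem_iInter.1 (hg τ), fun τ τ' hne =>
    lt_dist_of_mem_iInter_initialSegment (hF.lt_setDist_of_ne hsymm) hne (hg τ) (hg τ')⟩

end EpsPerfectTree

theorem stmt_18_general {X : Type*} [TopologicalSpace X] [T2Space X] (d : X → X → ℝ≥0∞)
    (hsymm : ∀ x y, d x y = d y x) (htri : ∀ x y z, d x z ≤ d x y + d y z)
    (ε : ℝ≥0) (hε : 0 < ε) (F : List Bool → Set X) (hF : EpsPerfectTree d ε F) :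
    (∃ g : (ℕ → Bool) → X, (∀ τ n, g τ ∈ F (initialSegment τ n)) ∧
      ∀ τ τ', τ ≠ τ' → ε < d (g τ) (g τ')) ∧
    ∀ A : Set X, (∀ x, ∀ r : ℝ≥0, 0 < r → ∃ a ∈ A, d x a < r) → 𝔠 ≤ #A := by
  obtain ⟨g, hmem, hsep⟩ := hF.exists_separated_branch_points hsymm
  refine ⟨⟨g, hmem, hsep⟩, fun A hdense => ?_⟩
  have near_branch_point (τ : ℕ → Bool) : ∃ a ∈ A, d (g τ) a < (ε : ℝ≥0∞) / 2 := by
    simpa using hdense (g τ) (ε / 2) (half_pos hε)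
  have card_le := lift_mk_le_of_separated_of_forall_exists_near hsymm htri
    (fun τ τ' hne => (hsep τ τ' hne).le) near_branch_point
  simpa using card_le

/-- an ε-perfect tree yields a family of points indexed by infinite binary
sequences, each lying in the corresponding branch, pairwise at distance `> ε`;
consequently every metrically dense subset has cardinality at least `2^ℵ₀`. -/
theorem stmt_18 {X : Type*} [TopologicalSpace X] (d : X → X → ℝ≥0∞)
    (htm : IsTopometric d) (ε : ℝ≥0) (hε : 0 < ε)
    (F : List Bool → Set X) (hF : EpsPerfectTree d ε F) :
    (∃ g : (ℕ → Bool) → X,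
      (∀ (τ : ℕ → Bool) (n : ℕ), g τ ∈ F (List.ofFn fun i : Fin n => τ i)) ∧
      ∀ τ τ' : ℕ → Bool, τ ≠ τ' → (ε : ℝ≥0∞) < d (g τ) (g τ')) ∧
    ∀ A : Set X, (∀ x : X, ∀ r : ℝ≥0, 0 < r → ∃ a ∈ A, d x a < (r : ℝ≥0∞)) →
      Cardinal.continuum ≤ Cardinal.mk A := by
  have := htm.2.2.t2Space htm.1.1
  exact stmt_18_general d htm.1.2.1 htm.1.2.2 ε hε F hF
end
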